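/- arXiv:2507.01405 — 2 statements merged into one kernel-verified Lean document; each statement's English description precedes it below -/
import Mathlib

section
/- For every x : ℤ, the symmetric 15×15 integer matrix M indexed by {0,…,14} with entries M₀₀ = −4, M₀₁ = 0, M₀₂ = −2, M₀₃ = −1, M₁₁ = 14, M₁₂ = x, M₁₃ = 1, M₂₂ = 0, M₂₃ = 0, M₃₃ = −1, M₃₄ = 1, Mᵢᵢ = −2 for 4 ≤ i ≤ 14, and all other entries (up to symmetry) equal to 0, satisfies det M = 2¹¹·(x − 4)·(x + 8). Consequently, if x > 0 and det M = 0 then x = 4. -/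
open Matrix

/-- The symmetric 15×15 intersection matrix of `K_W, D, F, G, N₀, …, N₁₀` in the case `k = 11`,
with `D·F = x` as a parameter. Entries are specified on `i ≤ j` and extended by symmetry. -/
def interMat11 (x : ℤ) : Matrix (Fin 15) (Fin 15) ℤ :=
  Matrix.of fun i j =>
    let a := min i.val j.val
    let b := max i.val j.val
    if a = 0 ∧ b = 0 then -4
    else if a = 0 ∧ b = 1 then 0
    else if a = 0 ∧ b = 2 then -2
    else if a = 0 ∧ b = 3 then -1
    else if a = 1 ∧ b = 1 then 14
    else if a = 1 ∧ b = 2 then x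
    else if a = 1 ∧ b = 3 then 1
    else if a = 2 ∧ b = 2 then 0
    else if a = 2 ∧ b = 3 then 0
    else if a = 3 ∧ b = 3 then -1
    else if a = 3 ∧ b = 4 then 1
    else if 4 ≤ a ∧ a = b then -2
    else 0

/-!
The classes `N₁, …, N₁₀` are orthogonal to all the others and to each other, and contribute the
factor `(-2)¹⁰`. Among the remaining five, `G` and `N₀` span a unimodular sublattice of
determinant `1`, which splits off as an orthogonal summand over the integers: replacing `K_W, D, F`
by their projections `K_W - 2G - N₀, D + 2G + N₀, F` to its orthogonal complement leaves a `3 × 3`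
determinant.
-/

section CommRing

variable {R : Type*} [CommRing R]

theorem det_fromBlocks_of_mul_eq_one {m n : Type*} [Fintype m] [DecidableEq m] [Fintype n]
    [DecidableEq n] (A : Matrix m m R) (B : Matrix m n R) (C : Matrix n m R) {D E : Matrix n n R}
    (hDE : D * E = 1) :
    (fromBlocks A B C D).det = D.det * (A - B * E * C).det := by
  let : Invertible D := invertibleOfRightInverse D E hDE
  exact det_fromBlocks₂₂ A B C D

/-- The Gram matrix of `K_W, D, F`, where `x = D·F`. -/
def gramKDF (x : R) : Matrix (Fin 3) (Fin 3) R :=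
  !![-4, 0, -2; 0, 14, x; -2, x, 0]

variable (R) in
/-- The intersection numbers of `K_W, D, F` (rows) with `G, N₀` (columns). -/
def gramKDFWithGN : Matrix (Fin 3) (Fin 2) R :=
  !![-1, 0; 1, 0; 0, 0]

variable (R) in
/-- The Gram matrix of `G, N₀`. -/
def gramGN : Matrix (Fin 2) (Fin 2) R :=
  !![-1, 1; 1, -2]

variable (R) in
/-- The inverse of `gramGN R`, which has entries in `R` because `⟨G, N₀⟩` is unimodular. -/
def gramGNInv : Matrix (Fin 2) (Fin 2) R :=
  !![-2, -1; -1, -1]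

/-- The Gram matrix of `K_W, D, F, G, N₀`, split into blocks as `{K_W, D, F} ∪ {G, N₀}`. -/
def gramKDFGN (x : R) : Matrix (Fin 3 ⊕ Fin 2) (Fin 3 ⊕ Fin 2) R :=
  fromBlocks (gramKDF x) (gramKDFWithGN R) (gramKDFWithGN R)ᵀ (gramGN R)

/-- The Gram matrix of the projections of `K_W, D, F` to the orthogonal complement of `G, N₀`. -/
def projGramKDF (x : R) : Matrix (Fin 3) (Fin 3) R :=
  !![-2, -2, -2; -2, 16, x; -2, x, 0]

theorem det_gramGN : (gramGN R).det = 1 := by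
  rw [gramGN, det_fin_two_of]
  norm_num

theorem gramGN_mul_gramGNInv : gramGN R * gramGNInv R = 1 := by
  rw [gramGN, gramGNInv, mul_fin_two, one_fin_two]
  norm_num

/-- The rows are the coordinates with respect to `G, N₀` of the components of `K_W, D, F` in
`⟨G, N₀⟩`. -/
theorem gramKDFWithGN_mul_gramGNInv :
    gramKDFWithGN R * gramGNInv R = !![2, 1; -2, -1; 0, 0] := by
  ext i j
  fin_cases i <;> fin_cases j <;> simp [gramKDFWithGN, gramGNInv]

theorem gramKDF_sub_eq_projGramKDF (x : R) :
    gramKDF x - gramKDFWithGN R * gramGNInv R * (gramKDFWithGN R)ᵀ = projGramKDF x := by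
  rw [gramKDFWithGN_mul_gramGNInv]
  ext i j
  fin_cases i <;> fin_cases j <;>
    simp [gramKDF, gramKDFWithGN, projGramKDF, vecMul_transpose] <;> norm_num

theorem det_projGramKDF (x : R) : (projGramKDF x).det = 2 * (x - 4) * (x + 8) := by
  rw [projGramKDF, det_fin_three]
  simp only [of_apply, cons_val]
  ring

theorem det_gramKDFGN (x : R) : (gramKDFGN x).det = 2 * (x - 4) * (x + 8) := by
  rw [gramKDFGN, det_fromBlocks_of_mul_eq_one _ _ _ gramGN_mul_gramGNInv, det_gramGN, one_mul,
    gramKDF_sub_eq_projGramKDF, det_projGramKDF]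

theorem det_fromBlocks_gramKDFGN_diagonal (x : R) (ι : Type*) [Fintype ι] [DecidableEq ι] :
    (fromBlocks (gramKDFGN x) 0 0 (diagonal fun _ : ι => (-2 : R))).det =
      2 * (x - 4) * (x + 8) * (-2) ^ Fintype.card ι := by
  rw [det_fromBlocks_zero₂₁, det_gramKDFGN, det_diagonal, Finset.prod_const, Finset.card_univ]

end CommRing

/-- The positions of the classes `{K_W, D, F} ∪ {G, N₀} ∪ {N₁, …, N₁₀}` in `interMat11`. -/
def blockEquiv : (Fin 3 ⊕ Fin 2) ⊕ Fin 10 ≃ Fin 15 :=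
  (finSumFinEquiv.sumCongr (Equiv.refl (Fin 10))).trans finSumFinEquiv

theorem interMat11_submatrix_blockEquiv (x : ℤ) :
    (interMat11 x).submatrix blockEquiv blockEquiv =
      fromBlocks (gramKDFGN x) 0 0 (diagonal fun _ : Fin 10 => -2) := by
  ext ((i | i) | i) ((j | j) | j) <;> fin_cases i <;> fin_cases j <;> rfl

theorem det_interMat11 (x : ℤ) :
    (interMat11 x).det = 2 ^ 11 * (x - 4) * (x + 8) ∧
      (x > 0 → (interMat11 x).det = 0 → x = 4) := by
  have hdet : (interMat11 x).det = 2 ^ 11 * (x - 4) * (x + 8) := by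
    rw [← det_submatrix_equiv_self blockEquiv, interMat11_submatrix_blockEquiv,
      det_fromBlocks_gramKDFGN_diagonal, Fintype.card_fin]
    ring
  refine ⟨hdet, fun hx hzero => ?_⟩
  have hfactor : x - 4 = 0 ∨ x + 8 = 0 := by simpa [hdet] using hzero
  omega
end

section
/- Let n : ℕ and let ⟨·,·⟩ denote the Minkowski bilinear form on ℝ^{n+1}. Suppose K, D, F, G, N : Fin (n+1) → ℝ satisfy ⟨K,K⟩ = −4, ⟨K,D⟩ = 0, ⟨D,D⟩ = 14, ⟨K,F⟩ = −2, ⟨D,F⟩ = 4, ⟨F,F⟩ = 0, ⟨K,G⟩ = −1, ⟨D,G⟩ = 1, ⟨G,G⟩ = −1, ⟨F,G⟩ = 0, ⟨K,N⟩ = 0, ⟨D,N⟩ = 0, ⟨F,N⟩ = 0, ⟨G,N⟩ = 1 and ⟨N,N⟩ = −2. Then 2·K + D = 3·F + 2·G + N. -/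
/-- The Minkowski (Lorentzian) bilinear form on `ℝ^{n+1}`:
`⟨x, y⟩ = x 0 * y 0 - ∑_{i=1}^{n} x i * y i`. -/
def mink (n : ℕ) (x y : Fin (n + 1) → ℝ) : ℝ :=
  x 0 * y 0 - ∑ i ∈ Finset.Ioi (0 : Fin (n + 1)), x i * y i

/-!
Both sides have square `-2` and product `-2` with each other, so their difference is isotropic; it
is moreover orthogonal to `K + D`, whose square is `10 > 0`. The index theorem makes the form
negative definite on the orthogonal complement of `K + D`, so the difference vanishes. On `ℝ^{n+1}`
the index theorem is the reversed Cauchy–Schwarz inequality for the Minkowski form.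
-/

section HodgeIndex

variable {R V : Type*} [CommRing R] [PartialOrder R] [AddCommGroup V] [Module R V]
  {B : LinearMap.BilinForm R V}

/-- The conclusion of the algebraic (Hodge) index theorem, as a property of a form: it is symmetric
and negative definite on the orthogonal complement of every vector of positive square. No vector of
positive square is required to exist. -/
structure HasHodgeIndex (B : LinearMap.BilinForm R V) : Prop where
  isSymm : B.IsSymm
  neg_of_orthogonal : ∀ {m v : V}, 0 < B m m → B m v = 0 → v ≠ 0 → B v v < 0

theorem HasHodgeIndex.eq_of_apply_eq (hB : HasHodgeIndex B) {m x y : V} (hm : 0 < B m m)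
    (hmxy : B m x = B m y) (hx : B x x = B x y) (hy : B y y = B x y) : x = y := by
  by_contra hne
  have orthogonal : B m (x - y) = 0 := by rw [map_sub, hmxy, sub_self]
  have isotropic : B (x - y) (x - y) = 0 := by
    rw [LinearMap.BilinForm.sub_left, map_sub, map_sub, hx, hy, hB.isSymm.eq y x, sub_self]
  exact (hB.neg_of_orthogonal hm orthogonal (sub_ne_zero.mpr hne)).ne isotropic

end HodgeIndex

theorem eq_zero_of_mul_eq_sum_mul_of_sum_sq_lt {ι R : Type*} [CommRing R] [LinearOrder R]
    [IsStrictOrderedRing R] {s : Finset ι} {f g : ι → R} {a b : R}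
    (hf : ∑ i ∈ s, f i ^ 2 < a ^ 2) (hfg : a * b = ∑ i ∈ s, f i * g i)
    (hg : ∑ i ∈ s, g i ^ 2 ≤ b ^ 2) : b = 0 := by
  by_contra hb
  refine lt_irrefl ((a * b) ^ 2) ?_
  calc
    (a * b) ^ 2 = (∑ i ∈ s, f i * g i) ^ 2 := by rw [hfg]
    _ ≤ (∑ i ∈ s, f i ^ 2) * ∑ i ∈ s, g i ^ 2 := s.sum_mul_sq_le_sq_mul_sq f g
    _ ≤ (∑ i ∈ s, f i ^ 2) * b ^ 2 :=
      mul_le_mul_of_nonneg_left hg (Finset.sum_nonneg fun i _ => sq_nonneg (f i))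
    _ < a ^ 2 * b ^ 2 := mul_lt_mul_of_pos_right hf (sq_pos_of_ne_zero hb)
    _ = (a * b) ^ 2 := (mul_pow a b 2).symm

section Minkowski

variable {n : ℕ}

theorem mink_comm (x y : Fin (n + 1) → ℝ) : mink n x y = mink n y x := by
  simp only [mink, mul_comm]

theorem mink_add_right (x y z : Fin (n + 1) → ℝ) :
    mink n x (y + z) = mink n x y + mink n x z := by
  simp only [mink, Pi.add_apply, mul_add, Finset.sum_add_distrib]
  ring

theorem mink_smul_right (c : ℝ) (x y : Fin (n + 1) → ℝ) :
    mink n x (c • y) = c * mink n x y := by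
  simp only [mink, Pi.smul_apply, smul_eq_mul, mul_left_comm _ c, ← Finset.mul_sum, mul_sub]

theorem mink_self_neg_of_orthogonal {m v : Fin (n + 1) → ℝ} (hm : 0 < mink n m m)
    (hmv : mink n m v = 0) (hv : v ≠ 0) : mink n v v < 0 := by
  contrapose! hv
  simp only [mink, ← sq, sub_pos, sub_nonneg] at hm hv
  have time_zero : v 0 = 0 :=
    eq_zero_of_mul_eq_sum_mul_of_sum_sq_lt hm (sub_eq_zero.mp hmv) hv
  have space_zero : ∀ i ∈ Finset.Ioi 0, v i = 0 := by
    have sq_nonneg_space : ∀ i ∈ Finset.Ioi 0, 0 ≤ v i ^ 2 := fun i _ => sq_nonneg (v i)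
    rw [time_zero, zero_pow two_ne_zero] at hv
    simpa only [sq_eq_zero_iff] using (Finset.sum_eq_zero_iff_of_nonneg sq_nonneg_space).mp
      (hv.antisymm (Finset.sum_nonneg sq_nonneg_space))
  funext i
  obtain rfl | hi := eq_or_ne i 0
  · exact time_zero
  · exact space_zero i (Finset.mem_Ioi.mpr (Fin.pos_of_ne_zero hi))

/-- The Minkowski form `mink n` bundled as a bilinear form. -/
def minkForm (n : ℕ) : LinearMap.BilinForm ℝ (Fin (n + 1) → ℝ) :=
  LinearMap.mk₂ ℝ (mink n)
    (fun x y z => by rw [mink_comm, mink_add_right, mink_comm z x, mink_comm z y])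
    (fun c x y => by rw [mink_comm, mink_smul_right, mink_comm y x, smul_eq_mul])
    mink_add_right
    mink_smul_right

theorem minkForm_hasHodgeIndex : HasHodgeIndex (minkForm n) where
  isSymm := ⟨mink_comm⟩
  neg_of_orthogonal := mink_self_neg_of_orthogonal

end Minkowski

theorem case11_M2_decomposition_general {R V : Type*} [CommRing R] [PartialOrder R]
    [IsStrictOrderedRing R] [AddCommGroup V] [Module R V] {B : LinearMap.BilinForm R V}
    (hB : HasHodgeIndex B) {K D F G N : V}
    (hKK : B K K = -4) (hKD : B K D = 0) (hDD : B D D = 14)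
    (hKF : B K F = -2) (hDF : B D F = 4) (hFF : B F F = 0)
    (hKG : B K G = -1) (hDG : B D G = 1) (hGG : B G G = -1)
    (hFG : B F G = 0)
    (hKN : B K N = 0) (hDN : B D N = 0) (hFN : B F N = 0)
    (hGN : B G N = 1) (hNN : B N N = -2) :
    2 • K + D = 3 • F + 2 • G + N := by
  have hDK : B D K = 0 := by rw [hB.isSymm.eq, hKD]
  have hGF : B G F = 0 := by rw [hB.isSymm.eq, hFG]
  have hNF : B N F = 0 := by rw [hB.isSymm.eq, hFN]
  have hNG : B N G = 1 := by rw [hB.isSymm.eq, hGN]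
  have hM : 0 < B (K + D) (K + D) := by
    simp only [map_add, LinearMap.add_apply, *]
    norm_num
  have hMl : B (K + D) (2 • K + D) = 6 := by
    simp only [map_add, map_nsmul, LinearMap.add_apply, *]
    norm_num
  have hMr : B (K + D) (3 • F + 2 • G + N) = 6 := by
    simp only [map_add, map_nsmul, LinearMap.add_apply, *]
    norm_num
  have hll : B (2 • K + D) (2 • K + D) = -2 := by
    simp only [map_add, map_nsmul, LinearMap.add_apply, LinearMap.smul_apply, *]
    norm_num
  have hlr : B (2 • K + D) (3 • F + 2 • G + N) = -2 := by
    simp only [map_add, map_nsmul, LinearMap.add_apply, LinearMap.smul_apply, *]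
    norm_num
  have hrr : B (3 • F + 2 • G + N) (3 • F + 2 • G + N) = -2 := by
    simp only [map_add, map_nsmul, LinearMap.add_apply, LinearMap.smul_apply, *]
    norm_num
  exact hB.eq_of_apply_eq hM (hMl.trans hMr.symm) (hll.trans hlr.symm) (hrr.trans hlr.symm)

/-- Step 2 of Proposition 3.4 (case k = 11): `2K_W + D ≡ 3F + 2G + N₀`. -/
theorem case11_M2_decomposition (n : ℕ) (K D F G N : Fin (n + 1) → ℝ)
    (hKK : mink n K K = -4) (hKD : mink n K D = 0) (hDD : mink n D D = 14)
    (hKF : mink n K F = -2) (hDF : mink n D F = 4) (hFF : mink n F F = 0)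
    (hKG : mink n K G = -1) (hDG : mink n D G = 1) (hGG : mink n G G = -1)
    (hFG : mink n F G = 0)
    (hKN : mink n K N = 0) (hDN : mink n D N = 0) (hFN : mink n F N = 0)
    (hGN : mink n G N = 1) (hNN : mink n N N = -2) :
    2 • K + D = 3 • F + 2 • G + N :=
  case11_M2_decomposition_general minkForm_hasHodgeIndex hKK hKD hDD hKF hDF hFF hKG hDG hGG hFG
    hKN hDN hFN hGN hNN
end
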